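/- arXiv:1609.09179 — 3 statements merged into one kernel-verified Lean document; each statement's English description precedes it below -/
import Mathlib

section
/- For every feasible solution ȳ ∈ Ω and every scenario c (i.e., every c : Fin n → ℝ with l i ≤ c i ≤ u i for all i), the regret of ȳ in c is at most the regret of ȳ in the induced scenario s(ȳ); that is, (Σ_i c i * ȳ i − min_{x∈Ω} Σ_i c i * x i) ≤ (Σ_i s(ȳ) i * ȳ i − min_{x∈Ω} Σ_i s(ȳ) i * x i). -/
open Finset

/-!
The regret of `y` in `c` is the supremum over `x ∈ Ω` of `∑ i, c i * (y i - x i)`, so it suffices to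
compare these sums for each competitor `x` separately. As `0 ≤ x i ≤ 1`, the factor `y i - x i` is
nonnegative where `y i = 1` and nonpositive where `y i = 0`; each summand is therefore largest when
`c i` is `u i` in the first case and `l i` in the second, which is the scenario induced by `y`.
-/

/-- The scenario induced by the solution `y` in the box of scenarios `[l, u]`: for binary `y`, every
item chosen by `y` gets its largest cost and every other item its smallest one. The operations are
coordinatewise. -/
def inducedScenario {ι R : Type*} [Ring R] (l u y : ι → R) : ι → R :=
  l + (u - l) * y

/-- The regret of `y` in the scenario `c`: how much `y` costs beyond the optimal cost over the
feasible set `Ω`. The optimal cost is encoded as an infimum, so that `Ω` may be infinite; for `Ω`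
empty, or costs unbounded below on `Ω`, it is the junk value `0`. -/
noncomputable def regret {ι : Type*} [Fintype ι] (Ω : Set (ι → ℝ)) (c y : ι → ℝ) : ℝ :=
  c ⬝ᵥ y - sInf ((c ⬝ᵥ ·) '' Ω)

theorem inducedScenario_of_eq_zero {ι R : Type*} [Ring R] (l u : ι → R) {y : ι → R} {i : ι}
    (hy : y i = 0) : inducedScenario l u y i = l i := by
  simp [inducedScenario, hy]

theorem inducedScenario_of_eq_one {ι R : Type*} [Ring R] (l u : ι → R) {y : ι → R} {i : ι}
    (hy : y i = 1) : inducedScenario l u y i = u i := by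
  simp [inducedScenario, hy]

theorem mul_sub_le_inducedScenario_mul_sub {ι R : Type*} [Ring R] [PartialOrder R]
    [IsOrderedRing R] {l u c x y : ι → R} {i : ι} (hc : c i ∈ Set.Icc (l i) (u i))
    (hx : x i ∈ Set.Icc 0 1) (hy : y i = 0 ∨ y i = 1) :
    c i * (y i - x i) ≤ inducedScenario l u y i * (y i - x i) := by
  rcases hy with hy | hy
  · rw [inducedScenario_of_eq_zero l u hy, hy]
    exact mul_le_mul_of_nonpos_right hc.1 (sub_nonpos.mpr hx.1)
  · rw [inducedScenario_of_eq_one l u hy, hy]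
    exact mul_le_mul_of_nonneg_right hc.2 (sub_nonneg.mpr hx.2)

theorem mem_Icc_zero_one_of_binary {ι R : Type*} [Zero R] [One R] [Preorder R]
    [ZeroLEOneClass R] {x : ι → R} (hx : ∀ i, x i = 0 ∨ x i = 1) : x ∈ Set.Icc 0 1 :=
  forall_and.mp fun i ↦ by rcases hx i with h | h <;> simp [h]

section Regret

variable {ι : Type*} [Fintype ι]

theorem dotProduct_sub_le_inducedScenario_dotProduct_sub {R : Type*} [Ring R] [PartialOrder R]
    [IsOrderedRing R] {l u c x y : ι → R} (hc : c ∈ Set.Icc l u) (hx : x ∈ Set.Icc 0 1)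
    (hy : ∀ i, y i = 0 ∨ y i = 1) :
    c ⬝ᵥ (y - x) ≤ inducedScenario l u y ⬝ᵥ (y - x) :=
  sum_le_sum fun i _ ↦
    mul_sub_le_inducedScenario_mul_sub ⟨hc.1 i, hc.2 i⟩ ⟨hx.1 i, hx.2 i⟩ (hy i)

theorem regret_coe_finset {Ω : Finset (ι → ℝ)} (hΩ : Ω.Nonempty) (c y : ι → ℝ) :
    regret Ω c y = c ⬝ᵥ y - Ω.inf' hΩ (c ⬝ᵥ ·) := by
  rw [regret, inf'_eq_csInf_image]

theorem regret_le_regret_of_dotProduct_sub_le {Ω : Set (ι → ℝ)} {c d y : ι → ℝ}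
    (hΩ : Ω.Nonempty) (hd : BddBelow ((d ⬝ᵥ ·) '' Ω))
    (h : ∀ x ∈ Ω, c ⬝ᵥ (y - x) ≤ d ⬝ᵥ (y - x)) :
    regret Ω c y ≤ regret Ω d y := by
  have optimum_le : sInf ((d ⬝ᵥ ·) '' Ω) - (d ⬝ᵥ y - c ⬝ᵥ y) ≤ sInf ((c ⬝ᵥ ·) '' Ω) := by
    refine le_csInf (hΩ.image _) (Set.forall_mem_image.mpr fun x hx ↦ ?_)
    have le_cost : sInf ((d ⬝ᵥ ·) '' Ω) ≤ d ⬝ᵥ x := csInf_le hd (Set.mem_image_of_mem _ hx)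
    have excess_le := h x hx
    rw [dotProduct_sub, dotProduct_sub] at excess_le
    linarith
  unfold regret
  linarith

theorem bddBelow_dotProduct_image {Ω : Set (ι → ℝ)} (hΩ : Bornology.IsBounded Ω) (c : ι → ℝ) :
    BddBelow ((c ⬝ᵥ ·) '' Ω) :=
  (hΩ.isCompact_closure.bddBelow_image
    (continuous_const.dotProduct continuous_id).continuousOn).mono
      (Set.image_mono subset_closure)

theorem regret_le_regret_induced_scenario_general {l u c y : ι → ℝ} {Ω : Set (ι → ℝ)}
    (hΩ : Ω.Nonempty) (hΩ01 : Ω ⊆ Set.Icc 0 1) (hy : ∀ i, y i = 0 ∨ y i = 1)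
    (hc : c ∈ Set.Icc l u) :
    regret Ω c y ≤ regret Ω (inducedScenario l u y) y :=
  regret_le_regret_of_dotProduct_sub_le hΩ
    (bddBelow_dotProduct_image ((Metric.isBounded_Icc 0 1).subset hΩ01) _)
    fun _ hx ↦ dotProduct_sub_le_inducedScenario_dotProduct_sub hc (hΩ01 hx) hy

end Regret

/-- For every feasible solution `ybar ∈ Ω` and every scenario `c`, the regret of
`ybar` in `c` is at most the regret of `ybar` in the induced scenario `s(ybar)`,
where `s(ybar) i = l i + (u i - l i) * ybar i`. -/
theorem regret_le_regret_induced_scenario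
    (n : ℕ) (hn : 0 < n) (l u : Fin n → ℝ)
    (hl : ∀ i, 0 ≤ l i) (hlu : ∀ i, l i ≤ u i)
    (Ω : Finset (Fin n → ℝ)) (hΩ : Ω.Nonempty)
    (hbin : ∀ y ∈ Ω, ∀ i, y i = 0 ∨ y i = 1)
    (ybar : Fin n → ℝ) (hybar : ybar ∈ Ω)
    (c : Fin n → ℝ) (hc : ∀ i, l i ≤ c i ∧ c i ≤ u i) :
    (∑ i, c i * ybar i) - Ω.inf' hΩ (fun x => ∑ i, c i * x i) ≤
      (∑ i, (l i + (u i - l i) * ybar i) * ybar i) -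
        Ω.inf' hΩ (fun x => ∑ i, (l i + (u i - l i) * ybar i) * x i) := by
  have regret_le := regret_le_regret_induced_scenario_general hΩ
    (fun x hx ↦ mem_Icc_zero_one_of_binary (hbin x hx)) (hbin ybar hybar)
    (forall_and.mp hc)
  rwa [regret_coe_finset hΩ, regret_coe_finset hΩ] at regret_le
end

section
/- Existence of an elementary robust path: for every β ∈ ℤ, if P(β) is nonempty, then there exists an elementary path p* ∈ P(β) that is a β-restricted robust path, i.e., whose β-restricted robustness cost R_{p*}^β equals min_{p∈P(β)} R_p^β. -/
open Finset

/-- The arcs of a walk described by its list of vertices: consecutive pairs. -/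
def walkArcs {V : Type*} (vs : List V) : List (V × V) := vs.zip vs.tail

/-- `IsPath A o t vs` : `vs` describes a directed walk from `o` to `t` whose arcs all belong to
`A` and are pairwise distinct. -/
def IsPath {V : Type*} (A : Finset (V × V)) (o t : V) (vs : List V) : Prop :=
  vs.head? = some o ∧ vs.getLast? = some t ∧
    (∀ a ∈ walkArcs vs, a ∈ A) ∧ (walkArcs vs).Nodup

/-- The set `A[p]` of arcs of a path. -/
def arcSet {V : Type*} [DecidableEq V] (vs : List V) : Finset (V × V) :=
  (walkArcs vs).toFinset

/-- The β-restricted robustness cost of a path `p`: the supremum over all scenarios `c`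
(with `l a ≤ c a ≤ u a` for all arcs `a`) of the β-restricted regret of `p` in `c`. -/
noncomputable def robustCost {V : Type*} [Fintype V] [DecidableEq V]
    (l u : V × V → ℕ) (P : Set (List V)) (p : List V) : ℝ :=
  sSup {r : ℝ | ∃ c : V × V → ℝ, (∀ a, (l a : ℝ) ≤ c a ∧ c a ≤ u a) ∧
    r = (∑ a ∈ arcSet p, c a) - sInf {v : ℝ | ∃ q ∈ P, v = ∑ a ∈ arcSet q, c a}}

/-! Deleting the cycles of a walk leaves an elementary walk with the same endpoints whose arcs are
among the original ones. Resource consumption and maximal regret are both monotone in the set of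
arcs, so cycle deletion preserves `P(β)` and does not increase the regret. There are only finitely
many arc sets; deleting the cycles of a path whose arc set is optimal gives the required path. -/

section MaxRegret

variable {ι : Type*} {l u c : ι → ℝ}

/-- The value of the minimization problem with family of feasible sets `𝓕` and additive costs `c`.
As an infimum of reals it is `0` when `𝓕` is empty. -/
noncomputable def minCost (𝓕 : Set (Finset ι)) (c : ι → ℝ) : ℝ :=
  sInf ((fun s => ∑ i ∈ s, c i) '' 𝓕)

/-- The robustness cost of a set `s` in interval min-max regret optimization: the supremum, over
the scenarios `c` between `l` and `u`, of the excess of the cost of `s` over that of a best set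
in `𝓕`. -/
noncomputable def maxRegret (l u : ι → ℝ) (𝓕 : Set (Finset ι)) (s : Finset ι) : ℝ :=
  sSup ((fun c => (∑ i ∈ s, c i) - minCost 𝓕 c) '' Set.Icc l u)

theorem minCost_nonneg (𝓕 : Set (Finset ι)) (hc : 0 ≤ c) : 0 ≤ minCost 𝓕 c :=
  Real.sInf_nonneg (Set.forall_mem_image.2 fun _ _ => sum_nonneg fun i _ => hc i)

theorem bddAbove_regret (hl : 0 ≤ l) (𝓕 : Set (Finset ι)) (s : Finset ι) :
    BddAbove ((fun c => (∑ i ∈ s, c i) - minCost 𝓕 c) '' Set.Icc l u) := by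
  refine ⟨∑ i ∈ s, u i, Set.forall_mem_image.2 fun c hc => ?_⟩
  calc (∑ i ∈ s, c i) - minCost 𝓕 c
      ≤ ∑ i ∈ s, c i := sub_le_self _ (minCost_nonneg 𝓕 (hl.trans hc.1))
    _ ≤ ∑ i ∈ s, u i := sum_le_sum fun i _ => hc.2 i

theorem maxRegret_mono (hl : 0 ≤ l) (hlu : l ≤ u) (𝓕 : Set (Finset ι)) :
    Monotone (maxRegret l u 𝓕) := by
  intro s t hst
  refine csSup_le ((Set.nonempty_Icc.2 hlu).image _) (Set.forall_mem_image.2 fun c hc => ?_)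
  have hcost : ∑ i ∈ s, c i ≤ ∑ i ∈ t, c i :=
    sum_le_sum_of_subset_of_nonneg hst fun i _ _ => (hl.trans hc.1) i
  calc (∑ i ∈ s, c i) - minCost 𝓕 c
      ≤ (∑ i ∈ t, c i) - minCost 𝓕 c := sub_le_sub_right hcost _
    _ ≤ maxRegret l u 𝓕 t := le_csSup (bddAbove_regret hl 𝓕 t) (Set.mem_image_of_mem _ hc)

end MaxRegret

section Walks

variable {V : Type*}

theorem walkArcs_suffix_cons (x : V) (vs : List V) : walkArcs vs <:+ walkArcs (x :: vs) := by
  cases vs with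
  | nil => exact List.suffix_rfl
  | cons y vs => exact List.suffix_cons _ _

theorem walkArcs_suffix_append (ws vs : List V) : walkArcs vs <:+ walkArcs (ws ++ vs) := by
  induction ws with
  | nil => exact List.suffix_rfl
  | cons x ws ih => exact ih.trans (walkArcs_suffix_cons x _)

theorem nodup_walkArcs {vs : List V} (h : vs.Nodup) : (walkArcs vs).Nodup := by
  apply List.Nodup.of_map Prod.snd
  rw [walkArcs, List.map_snd_zip (by simp)]
  exact h.sublist (List.tail_sublist _)

theorem walkArcs_cons_subset_cons (x : V) {vs ws : List V} (hhead : vs.head? = ws.head?)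
    (h : walkArcs vs ⊆ walkArcs ws) : walkArcs (x :: vs) ⊆ walkArcs (x :: ws) := by
  match vs, ws with
  | [], _ => exact List.nil_subset _
  | y :: _, z :: _ =>
    obtain rfl : y = z := Option.some.inj hhead
    exact List.cons_subset_cons (x, y) h

theorem exists_nodup_walkArcs_subset (q : List V) :
    ∃ p : List V, p.Nodup ∧ p.head? = q.head? ∧ p.getLast? = q.getLast? ∧
      walkArcs p ⊆ walkArcs q := by
  induction q with
  | nil => exact ⟨[], List.nodup_nil, rfl, rfl, List.Subset.refl _⟩
  | cons x q ih =>
    obtain ⟨p, hnodup, hhead, hlast, harcs⟩ := ih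
    by_cases hx : x ∈ p
    · -- `x` is revisited: skip the cycle by starting at its occurrence in `p`.
      obtain ⟨s, r, rfl⟩ := List.append_of_mem hx
      refine ⟨x :: r, (List.nodup_append.1 hnodup).2.1, rfl, ?_, ?_⟩
      · rw [List.getLast?_append_of_ne_nil _ (List.cons_ne_nil x r)] at hlast
        simp [List.getLast?_cons (l := q), ← hlast, List.getLast?_cons]
      · exact List.Subset.trans (List.Subset.trans (walkArcs_suffix_append s _).subset harcs)
          (walkArcs_suffix_cons x q).subset
    · exact ⟨x :: p, List.nodup_cons.2 ⟨hx, hnodup⟩, rfl, by simp only [List.getLast?_cons, hlast],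
        walkArcs_cons_subset_cons x hhead harcs⟩

end Walks

section Paths

variable {V M : Type*} [DecidableEq V] {A : Finset (V × V)} {o t : V} {q : List V}

theorem arcSet_subset_arcSet {p : List V} (h : walkArcs p ⊆ walkArcs q) :
    arcSet p ⊆ arcSet q :=
  fun _ ha => List.mem_toFinset.2 (h (List.mem_toFinset.1 ha))

theorem IsPath.arcSet_subset (h : IsPath A o t q) : arcSet q ⊆ A :=
  fun a ha => h.2.2.1 a (List.mem_toFinset.1 ha)

theorem IsPath.exists_nodup_arcSet_subset (h : IsPath A o t q) :
    ∃ p, IsPath A o t p ∧ p.Nodup ∧ arcSet p ⊆ arcSet q := by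
  obtain ⟨hhead, hlast, hmem, -⟩ := h
  obtain ⟨p, hnodup, hhead', hlast', harcs⟩ := exists_nodup_walkArcs_subset q
  exact ⟨p, ⟨hhead'.trans hhead, hlast'.trans hlast, fun a ha => hmem a (harcs ha),
    nodup_walkArcs hnodup⟩, hnodup, arcSet_subset_arcSet harcs⟩

variable [AddCommMonoid M] [Preorder M] {d : V × V → M} {β : M}

/-- The set `P(β)` of paths from `o` to `t` with resource consumption at most `β`. Resources live
in a preordered monoid, so that several resources can be bounded at once. -/
def restrictedPaths (A : Finset (V × V)) (o t : V) (d : V × V → M) (β : M) : Set (List V) :=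
  {q | IsPath A o t q ∧ ∑ a ∈ arcSet q, d a ≤ β}

theorem finite_arcSet_image_restrictedPaths : (arcSet '' restrictedPaths A o t d β).Finite :=
  A.powerset.finite_toSet.subset <| Set.image_subset_iff.2 fun _ hq =>
    mem_powerset.2 hq.1.arcSet_subset

variable [AddLeftMono M]

theorem exists_nodup_mem_restrictedPaths (hd : 0 ≤ d) (hq : q ∈ restrictedPaths A o t d β) :
    ∃ p ∈ restrictedPaths A o t d β, p.Nodup ∧ arcSet p ⊆ arcSet q := by
  obtain ⟨p, hp, hnodup, hsub⟩ := hq.1.exists_nodup_arcSet_subset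
  have hcons : ∑ a ∈ arcSet p, d a ≤ ∑ a ∈ arcSet q, d a :=
    sum_le_sum_of_subset_of_nonneg hsub fun a _ _ => hd a
  exact ⟨p, ⟨hp, hcons.trans hq.2⟩, hnodup, hsub⟩

theorem exists_nodup_isMinOn_of_monotone {α : Type*} [LinearOrder α] {f : Finset (V × V) → α}
    (hf : Monotone f) (hd : 0 ≤ d) (hne : (restrictedPaths A o t d β).Nonempty) :
    ∃ p ∈ restrictedPaths A o t d β, p.Nodup ∧
      IsMinOn (fun q => f (arcSet q)) (restrictedPaths A o t d β) p := by
  obtain ⟨_, ⟨q, hq, rfl⟩, hmin⟩ :=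
    Set.exists_min_image _ f finite_arcSet_image_restrictedPaths (hne.image arcSet)
  obtain ⟨p, hp, hnodup, hsub⟩ := exists_nodup_mem_restrictedPaths hd hq
  exact ⟨p, hp, hnodup, fun r hr => (hf hsub).trans (hmin _ (Set.mem_image_of_mem _ hr))⟩

theorem exists_elementary_robust_path_general (A : Finset (V × V)) (o t : V)
    (l u : V × V → ℝ) (hl : 0 ≤ l) (hlu : l ≤ u) (d : V × V → M) (hd : 0 ≤ d) (β : M)
    (P : Set (List V)) (hP : P = restrictedPaths A o t d β) (hPne : P.Nonempty) :
    ∃ p ∈ P, p.Nodup ∧ IsLeast {r : ℝ | ∃ q ∈ P, r = maxRegret l u (arcSet '' P) (arcSet q)}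
      (maxRegret l u (arcSet '' P) (arcSet p)) := by
  subst hP
  obtain ⟨p, hp, hnodup, hmin⟩ := exists_nodup_isMinOn_of_monotone (maxRegret_mono hl hlu _) hd hPne
  exact ⟨p, hp, hnodup, ⟨p, hp, rfl⟩, by rintro _ ⟨q, hq, rfl⟩; exact hmin hq⟩

end Paths

theorem robustCost_eq_maxRegret {V : Type*} [Fintype V] [DecidableEq V] (l u : V × V → ℕ)
    (P : Set (List V)) (p : List V) :
    robustCost l u P p = maxRegret (fun a => l a) (fun a => u a) (arcSet '' P) (arcSet p) := by
  have hcost (c : V × V → ℝ) :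
      {v : ℝ | ∃ q ∈ P, v = ∑ a ∈ arcSet q, c a} = (fun s => ∑ a ∈ s, c a) '' (arcSet '' P) := by
    ext v
    simp [eq_comm]
  simp only [robustCost, hcost]
  refine congrArg sSup (Set.ext fun r => exists_congr fun c => ?_)
  exact and_congr forall_and eq_comm

/-- existence of an elementary robust path: for every `β`, if `P(β)` is nonempty,
then some elementary path `p* ∈ P(β)` is a β-restricted robust path, i.e. its β-restricted
robustness cost equals `min_{p ∈ P(β)} R_p^β`. -/
theorem exists_elementary_robust_path
    {V : Type*} [Fintype V] [DecidableEq V]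
    (A : Finset (V × V)) (o t : V)
    (l u : V × V → ℕ) (hlu : ∀ a, l a ≤ u a) (d : V × V → ℕ) (β : ℤ)
    (P : Set (List V))
    (hP : P = {q : List V | IsPath A o t q ∧ (∑ a ∈ arcSet q, (d a : ℤ)) ≤ β})
    (hPne : P.Nonempty) :
    ∃ p ∈ P, p.Nodup ∧
      robustCost l u P p = sInf {r : ℝ | ∃ q ∈ P, r = robustCost l u P q} := by
  simp only [robustCost_eq_maxRegret]
  obtain ⟨p, hp, hnodup, hmin⟩ := exists_elementary_robust_path_general A o t (fun a => l a)
    (fun a => u a) (fun a => Nat.cast_nonneg _) (fun a => Nat.cast_le.2 (hlu a))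
    (fun a => (d a : ℤ)) (fun a => Nat.cast_nonneg _) β P hP hPne
  exact ⟨p, hp, hnodup, hmin.csInf_eq.symm⟩
end

section
/- Intermediate inequality (b15) in the proof of Theorem 2: let F be a nonempty finite family of subsets of E, let p̃, p ∈ F with p̃ ⊆ p, and let q* ∈ F minimize the cost under the scenario s(p̃) induced by p̃, i.e., Σ_{e∈q*} s(p̃) e = min_{q∈F} Σ_{e∈q} s(p̃) e. Then Σ_{e∈p̃} s(p̃) e − Σ_{e∈q*} s(p̃) e ≤ Σ_{e∈p} s(p) e − Σ_{e∈q*} s(p) e. -/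
open Finset

/-! Costs shared by `r` and `q` cancel in the regret of `r` against `q`, leaving
`∑ e ∈ r \ q, u e - ∑ e ∈ q \ r, l e`. As `r` grows, the first sum gains nonnegative terms and
the second loses nonnegative terms. -/

section InducedScenario

variable {α M : Type*} [DecidableEq α] [AddCommGroup M]

theorem sum_piecewise_sub_sum_piecewise (l u : α → M) (r q : Finset α) :
    ∑ e ∈ r, r.piecewise u l e - ∑ e ∈ q, r.piecewise u l e =
      ∑ e ∈ r \ q, u e - ∑ e ∈ q \ r, l e := by
  have cost_on_selected : ∑ e ∈ r \ q, r.piecewise u l e = ∑ e ∈ r \ q, u e :=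
    sum_congr rfl fun e he => piecewise_eq_of_mem r u l (mem_sdiff.mp he).1
  have cost_off_selected : ∑ e ∈ q \ r, r.piecewise u l e = ∑ e ∈ q \ r, l e :=
    sum_congr rfl fun e he => piecewise_eq_of_notMem r u l (mem_sdiff.mp he).2
  rw [← sum_sdiff_sub_sum_sdiff, cost_on_selected, cost_off_selected]

theorem induced_regret_intermediate_inequality_general
    [PartialOrder M] [IsOrderedAddMonoid M]
    (l u : α → M) (hl : ∀ e, 0 ≤ l e) (hu : ∀ e, 0 ≤ u e)
    {pt p : Finset α} (hsub : pt ⊆ p) (q : Finset α) :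
    ∑ e ∈ pt, pt.piecewise u l e - ∑ e ∈ q, pt.piecewise u l e ≤
      ∑ e ∈ p, p.piecewise u l e - ∑ e ∈ q, p.piecewise u l e := by
  have upper_costs_le : ∑ e ∈ pt \ q, u e ≤ ∑ e ∈ p \ q, u e :=
    sum_le_sum_of_subset_of_nonneg (sdiff_subset_sdiff hsub Subset.rfl) fun e _ _ => hu e
  have lower_costs_le : ∑ e ∈ q \ p, l e ≤ ∑ e ∈ q \ pt, l e :=
    sum_le_sum_of_subset_of_nonneg (sdiff_subset_sdiff Subset.rfl hsub) fun e _ _ => hl e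
  calc
    ∑ e ∈ pt, pt.piecewise u l e - ∑ e ∈ q, pt.piecewise u l e
    _ = ∑ e ∈ pt \ q, u e - ∑ e ∈ q \ pt, l e := sum_piecewise_sub_sum_piecewise l u pt q
    _ ≤ ∑ e ∈ p \ q, u e - ∑ e ∈ q \ p, l e := sub_le_sub upper_costs_le lower_costs_le
    _ = ∑ e ∈ p, p.piecewise u l e - ∑ e ∈ q, p.piecewise u l e :=
      (sum_piecewise_sub_sum_piecewise l u p q).symm

end InducedScenario

/-- intermediate inequality (b15) in the proof of Theorem 2: if `F` is a nonempty
finite family of subsets of `E`, `p̃, p ∈ F` with `p̃ ⊆ p`, and `q* ∈ F` minimizes the cost under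
the scenario `s(p̃)` induced by `p̃` (which assigns `u e` to `e ∈ p̃` and `l e` otherwise), then
`C_{p̃}^{s(p̃)} - C_{q*}^{s(p̃)} ≤ C_p^{s(p)} - C_{q*}^{s(p)}`. -/
theorem induced_regret_intermediate_inequality
    {α : Type*} [Fintype α] [DecidableEq α]
    (l u : α → ℝ) (hl : ∀ e, 0 ≤ l e) (hlu : ∀ e, l e ≤ u e)
    (F : Finset (Finset α)) (hF : F.Nonempty)
    (pt p : Finset α) (hptF : pt ∈ F) (hpF : p ∈ F) (hsub : pt ⊆ p)
    (qstar : Finset α) (hq : qstar ∈ F)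
    (hqmin : (∑ e ∈ qstar, (if e ∈ pt then u e else l e)) =
      F.inf' hF (fun q => ∑ e ∈ q, (if e ∈ pt then u e else l e))) :
    (∑ e ∈ pt, (if e ∈ pt then u e else l e)) -
        (∑ e ∈ qstar, (if e ∈ pt then u e else l e)) ≤
      (∑ e ∈ p, (if e ∈ p then u e else l e)) -
        (∑ e ∈ qstar, (if e ∈ p then u e else l e)) :=
  induced_regret_intermediate_inequality_general l u hl (fun e => (hl e).trans (hlu e)) hsub qstar
end
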